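/- Let N ≥ 1 and let Ω and M be bounded domains in ℂ^N. Let f_j : Ω → M be injective holomorphic maps such that for every compact K ⊆ M there is j_0(K) with K ⊆ f_j(Ω) for all j ≥ j_0(K). Assume there exist a point a ∈ M, points x_j ∈ Ω with f_j(x_j) = a for all j, and a point p ∈ Ω such that x_j → p. Then there exists a holomorphic bijection from Ω onto M with holomorphic inverse. -/

import Mathlib

open Filter Topology Set Metric

section RadoFunctions

/-- Maximum principle for functions that are continuous on a closed disc and holomorphic off their
zero set. -/
theorem norm_le_of_differentiableAt_of_ne_zero {ψ : ℂ → ℂ} {c : ℂ} {R A : ℝ} (hA : 0 ≤ A)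
    (hc : ContinuousOn ψ (closedBall c R)) (hd : ∀ t ∈ ball c R, ψ t ≠ 0 → DifferentiableAt ℂ ψ t)
    (hb : ∀ t ∈ sphere c R, ‖ψ t‖ ≤ A) {t : ℂ} (ht : t ∈ ball c R) : ‖ψ t‖ ≤ A := by
  by_cases h0 : ψ t = 0
  · simpa [h0] using hA
  set U : Set ℂ := ball c R ∩ ψ ⁻¹' {0}ᶜ
  have hU : IsOpen U :=
    (hc.mono ball_subset_closedBall).isOpen_inter_preimage isOpen_ball isOpen_compl_singleton
  have hcl : closure U ⊆ closedBall c R :=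
    (closure_mono inter_subset_left).trans closure_ball_subset_closedBall
  refine Complex.norm_le_of_forall_mem_frontier_norm_le (U := U) (isBounded_ball.subset
    inter_subset_left) ⟨fun s hs => (hd s hs.1 hs.2).differentiableWithinAt, hc.mono hcl⟩ ?_
    (subset_closure ⟨ht, h0⟩)
  intro s hs
  rw [hU.frontier_eq] at hs
  by_cases hs0 : ψ s = 0
  · simpa [hs0] using hA
  refine hb s ?_
  have h1 := hcl hs.1
  rw [mem_closedBall] at h1
  refine le_antisymm h1 (not_lt.1 fun h => hs.2 ⟨h, hs0⟩)

/-- A bound on the boundary circle for `q` propagates to the points where `η` does not vanish, as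
soon as all products `η * q ^ k` are continuous, and holomorphic off the zero set of `η`. -/
theorem norm_le_of_continuousOn_mul_pow {η q : ℂ → ℂ} {c : ℂ} {R B : ℝ} (hB : 0 < B)
    (hη : ContinuousOn η (closedBall c R))
    (hc : ∀ k : ℕ, ContinuousOn (fun t => η t * q t ^ k) (closedBall c R))
    (hηd : ∀ t ∈ ball c R, η t ≠ 0 → DifferentiableAt ℂ η t)
    (hqd : ∀ t ∈ ball c R, η t ≠ 0 → q t ≠ 0 → DifferentiableAt ℂ q t)
    (hb : ∀ t ∈ sphere c R, ‖q t‖ ≤ B) {t : ℂ} (ht : t ∈ ball c R) (ht0 : η t ≠ 0) :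
    ‖q t‖ ≤ B := by
  obtain ⟨A, hA⟩ := (isCompact_closedBall c R).exists_bound_of_continuousOn hη
  have hA0 : 0 ≤ A := (norm_nonneg _).trans (hA t (ball_subset_closedBall ht))
  have key : ∀ k : ℕ, ‖η t‖ * ‖q t‖ ^ (k + 1) ≤ A * B ^ (k + 1) := by
    intro k
    have := norm_le_of_differentiableAt_of_ne_zero (A := A * B ^ (k + 1)) (by positivity)
      (hc (k + 1)) (fun s hs h => ?_) (fun s hs => ?_) ht
    · simpa using this
    · have h1 : η s ≠ 0 := left_ne_zero_of_mul h
      have h2 : q s ≠ 0 := fun h' => h (by simp [h'])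
      exact (hηd s hs h1).mul ((hqd s hs h1 h2).pow _)
    · rw [norm_mul, norm_pow]
      have := hA s (sphere_subset_closedBall hs)
      have := hb s hs
      gcongr
  by_contra! hlt
  have h1 : 1 < ‖q t‖ / B := (one_lt_div hB).2 hlt
  have hη0 : 0 < ‖η t‖ := norm_pos_iff.2 ht0
  obtain ⟨k, hk⟩ := pow_unbounded_of_one_lt (A / ‖η t‖) h1
  have h2 : (‖q t‖ / B) ^ k ≤ (‖q t‖ / B) ^ (k + 1) := pow_le_pow_right₀ h1.le (Nat.le_succ k)
  have h3 := hk.trans_le h2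
  rw [div_pow, div_lt_div_iff₀ hη0 (by positivity)] at h3
  linarith [key k]

theorem eq_zero_of_eventually_eq_zero_center {η : ℂ → ℂ} {c : ℂ} {R : ℝ}
    (hη : ContinuousOn η (closedBall c R))
    (hηd : ∀ t ∈ ball c R, η t ≠ 0 → DifferentiableAt ℂ η t)
    (h0 : ∀ᶠ t in 𝓝 c, η t = 0) {t : ℂ} (ht : t ∈ ball c R) : η t = 0 := by
  by_contra hne
  have hR : 0 < R := pos_of_mem_ball ht
  have htc : t ≠ c := fun h => hne (h ▸ h0.self_of_nhds)
  have key := norm_le_of_continuousOn_mul_pow (η := η) (q := fun s => (s - c)⁻¹) (B := R⁻¹)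
    (inv_pos.2 hR) hη (fun k s hs => ?_) hηd (fun s hs _ hs0 => ?_) (fun s hs => ?_) ht hne
  · rw [norm_inv, inv_le_inv₀ (norm_pos_iff.2 (sub_ne_zero.2 htc)) hR] at key
    rw [mem_ball, dist_eq_norm] at ht
    linarith
  · by_cases hsc : s = c
    · subst hsc
      refine ContinuousAt.continuousWithinAt ?_
      refine (continuousAt_const (y := (0 : ℂ))).congr ?_
      filter_upwards [h0] with y hy using by simp [hy]
    · refine (hη s hs).mul (ContinuousAt.continuousWithinAt ?_)
      have : s - c ≠ 0 := sub_ne_zero.2 hsc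
      exact ((continuousAt_id.sub continuousAt_const).inv₀ this).pow k
  · have : s - c ≠ 0 := fun h => hs0 (by simp [h])
    exact (differentiableAt_id.sub_const c).inv this
  · rw [mem_sphere, dist_eq_norm] at hs
    simp [hs]

variable {E : Type*} [NormedAddCommGroup E] [NormedSpace ℂ E]

theorem eqOn_zero_of_differentiableAt_of_ne_zero {U : Set E} (hU : IsOpen U)
    (hUc : IsPreconnected U) {H : E → ℂ} (hH : ContinuousOn H U)
    (hd : ∀ w ∈ U, H w ≠ 0 → DifferentiableAt ℂ H w) {w₀ : E} (hw₀ : w₀ ∈ U)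
    (h0 : ∀ᶠ w in 𝓝 w₀, H w = 0) : ∀ w ∈ U, H w = 0 := by
  have hsub : U ⊆ {w | ∀ᶠ y in 𝓝 w, H y = 0} := by
    refine hUc.subset_of_closure_inter_subset (isOpen_setOfPred_eventually_nhds)
      ⟨w₀, hw₀, h0⟩ ?_
    rintro w ⟨hwc, hwU⟩
    obtain ⟨r, hr, hball⟩ := Metric.isOpen_iff.1 hU w hwU
    obtain ⟨y, hy, hyw⟩ := Metric.mem_closure_iff.1 hwc (r / 3) (by positivity)
    have hzero : ∀ v ∈ ball y (r / 3), H v = 0 := by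
      intro v hv
      set η : ℂ → ℂ := fun t => H (y + t • (v - y))
      have hmaps : MapsTo (fun t : ℂ => y + t • (v - y)) (closedBall 0 2) U := by
        intro t ht
        apply hball
        rw [mem_closedBall_zero_iff] at ht
        rw [mem_ball, dist_eq_norm] at hv
        rw [dist_comm] at hyw
        have : dist (y + t • (v - y)) y ≤ 2 * (r / 3) := by
          rw [dist_eq_norm, add_sub_cancel_left, norm_smul]; gcongr
        rw [mem_ball]
        linarith [dist_triangle (y + t • (v - y)) y w]
      have hline : Differentiable ℂ (fun t : ℂ => y + t • (v - y)) := by fun_prop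
      have := eq_zero_of_eventually_eq_zero_center (η := η) (c := 0) (R := 2) (t := 1)
        (hH.comp hline.continuous.continuousOn hmaps)
        (fun t ht h => (hd _ (hmaps (ball_subset_closedBall ht)) h).comp t (hline t))
        ?_ (by simp)
      · simpa [η] using this
      · have h1 : Tendsto (fun t : ℂ => y + t • (v - y)) (𝓝 0) (𝓝 y) := by
          simpa using hline.continuous.tendsto 0
        exact h1.eventually hy
    have : ball y (r / 3) ∈ 𝓝 w := isOpen_ball.mem_nhds hyw
    filter_upwards [this] with v hv using hzero v hv
  exact fun w hw => (hsub hw).self_of_nhds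

end RadoFunctions

section Weierstrass

variable {E F : Type*} [NormedAddCommGroup E] [NormedSpace ℂ E] [NormedAddCommGroup F]
  [NormedSpace ℂ F]

/-- Weierstrass convergence theorem: uniform limits of holomorphic maps are holomorphic, and the
derivatives converge uniformly on smaller balls. -/
theorem TendstoUniformlyOn.differentiableOn_and_fderiv [CompleteSpace F] {ι : Type*} {l : Filter ι}
    [l.NeBot] {f : ι → E → F} {g : E → F} {c : E} {r : ℝ}
    (hd : ∀ᶠ n in l, DifferentiableOn ℂ (f n) (ball c r))
    (hfg : TendstoUniformlyOn f g l (ball c r)) :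
    DifferentiableOn ℂ g (ball c (r / 2)) ∧
      TendstoUniformlyOn (fun n => fderiv ℂ (f n)) (fderiv ℂ g) l (ball c (r / 2)) := by
  rcases le_or_gt r 0 with hr | hr
  · rw [ball_eq_empty.2 (by linarith)]
    exact ⟨differentiableOn_empty, tendstoUniformlyOn_empty⟩
  have hsub : ball c (r / 2) ⊆ ball c r := ball_subset_ball (by linarith)
  have hsub' : ∀ y ∈ ball c (r / 2), ball y (r / 2) ⊆ ball c r := fun y hy =>
    ball_subset_ball' (by rw [mem_ball] at hy; linarith)
  have hcauchy : UniformCauchySeqOn (fun n => fderiv ℂ (f n)) l (ball c (r / 2)) := by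
    intro u hu
    obtain ⟨ε, hε, hεu⟩ := Metric.mem_uniformity_dist.1 hu
    obtain ⟨δ, hδ, hδε⟩ : ∃ δ > 0, 2 * δ / (r / 2) < ε :=
      ⟨ε * r / 8, by positivity, by field_simp; norm_num⟩
    filter_upwards [hfg.uniformCauchySeqOn _ (Metric.dist_mem_uniformity hδ),
      hd.prod_mk hd] with m hm hdm y hy
    refine hεu ?_
    have hd1 : ∀ n, DifferentiableOn ℂ (f n) (ball c r) → DifferentiableAt ℂ (f n) y :=
      fun n h => h.differentiableAt (isOpen_ball.mem_nhds (hsub hy))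
    rw [dist_eq_norm]
    rw [← fderiv_sub (hd1 _ hdm.1) (hd1 _ hdm.2)]
    refine lt_of_le_of_lt (Complex.norm_fderiv_le_div_of_mapsTo_ball (R₁ := r / 2) (R₂ := 2 * δ)
      ((hdm.1.sub hdm.2).mono (hsub' y hy)) (fun z hz => ?_) (by positivity)) hδε
    have h1 : dist (f m.1 y) (f m.2 y) < δ := hm y (hsub hy)
    have h2 : dist (f m.1 z) (f m.2 z) < δ := hm z (hsub' y hy hz)
    rw [dist_eq_norm] at h1 h2
    rw [mem_closedBall, dist_eq_norm, Pi.sub_apply, Pi.sub_apply]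
    linarith [norm_sub_le (f m.1 z - f m.2 z) (f m.1 y - f m.2 y)]
  have hlim : ∀ y ∈ ball c (r / 2), ∃ A, Tendsto (fun n => fderiv ℂ (f n) y) l (𝓝 A) :=
    fun y hy => CompleteSpace.complete (hcauchy.cauchy_map hy)
  choose! A hA using hlim
  have hunif : TendstoUniformlyOn (fun n => fderiv ℂ (f n)) A l (ball c (r / 2)) :=
    hcauchy.tendstoUniformlyOn_of_tendsto hA
  have hderiv : ∀ y ∈ ball c (r / 2), HasFDerivAt g (A y) y := by
    intro y hy
    have hy' : ball c (r / 2) ∈ 𝓝 y := isOpen_ball.mem_nhds hy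
    refine hasFDerivAt_of_tendstoUniformlyOnFilter (l := l) (f := f)
      (f' := fun n => fderiv ℂ (f n))
      ((tendstoUniformlyOn_iff_tendstoUniformlyOnFilter.1 hunif).mono_right
        (le_principal_iff.2 hy')) ?_ ?_
    · filter_upwards [hd.prod_mk (eventually_mem_set.2 hy')] with n hn
      exact (hn.1.differentiableAt (isOpen_ball.mem_nhds (hsub hn.2))).hasFDerivAt
    · filter_upwards [hy'] with z hz using hfg.tendsto_at (hsub hz)
  refine ⟨fun y hy => (hderiv y hy).differentiableAt.differentiableWithinAt, ?_⟩
  exact hunif.congr_right fun y hy => (hderiv y hy).fderiv.symm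

/-- Second order Taylor estimate for holomorphic maps. -/
theorem norm_sub_sub_fderiv_le_of_mapsTo_ball {f : E → F} {z w : E} {r C : ℝ}
    (hf : DifferentiableOn ℂ f (ball z r)) (hb : MapsTo f (ball z r) (closedBall (f z) C))
    (hw : w ∈ ball z r) : ‖f w - f z - fderiv ℂ f z (w - z)‖ ≤ 2 * C * (‖w - z‖ / r) ^ 2 := by
  have hr : 0 < r := pos_of_mem_ball hw
  have hC := Complex.norm_fderiv_le_div_of_mapsTo_ball hf hb hr
  have hfz : DifferentiableAt ℂ f z := hf.differentiableAt (ball_mem_nhds z hr)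
  have key := Complex.dist_le_mul_div_pow_of_mapsTo_ball_of_isLittleO (n := 1) (R₂ := 2 * C)
    (f := fun w => f w - fderiv ℂ f z (w - z)) (c := z) (z := w) (R₁ := r)
    (hf.sub (by fun_prop)) ?_ ?_ hw
  · simpa [dist_eq_norm, sub_right_comm] using key
  · intro y hy
    have h1 := hb hy
    rw [mem_ball, dist_eq_norm] at hy
    rw [mem_closedBall, dist_eq_norm] at h1 ⊢
    have hC0 : 0 ≤ C / r := (norm_nonneg _).trans hC
    have h2 : ‖fderiv ℂ f z (y - z)‖ ≤ C / r * r :=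
      (ContinuousLinearMap.le_opNorm _ _).trans (by gcongr)
    rw [div_mul_cancel₀ _ hr.ne'] at h2
    simp only [sub_self, map_zero, sub_zero]
    rw [sub_right_comm]
    linarith [norm_sub_le (f y - f z) (fderiv ℂ f z (y - z))]
  · have := hfz.hasFDerivAt.isLittleO
    simp only [sub_self, map_zero, sub_zero, pow_one]
    refine Asymptotics.IsLittleO.norm_right ?_
    simpa [sub_right_comm] using this

theorem differentiableOn_fderiv_apply_of_isOpen [CompleteSpace F] {f : E → F} {U : Set E}
    (hU : IsOpen U) (hf : DifferentiableOn ℂ f U) (v : E) :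
    DifferentiableOn ℂ (fun z => fderiv ℂ f z v) U := by
  intro c hc
  have hfc : ContinuousAt f c := hf.continuousOn.continuousAt (hU.mem_nhds hc)
  obtain ⟨R, hR, hball⟩ := Metric.mem_nhds_iff.1
    (inter_mem (hU.mem_nhds hc) (hfc.preimage_mem_nhds (ball_mem_nhds (f c) one_pos)))
  set r : ℝ := R / 2
  have hr : 0 < r := by positivity
  have hsub : ∀ z ∈ ball c r, ball z r ⊆ ball c R := fun z hz =>
    ball_subset_ball' (by rw [mem_ball] at hz; simp only [r] at hz ⊢; linarith)
  have hdR : DifferentiableOn ℂ f (ball c R) := hf.mono fun y hy => (hball hy).1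
  have htay : ∀ z ∈ ball c r, ∀ w ∈ ball z r,
      ‖f w - f z - fderiv ℂ f z (w - z)‖ ≤ 2 * 2 * (‖w - z‖ / r) ^ 2 := by
    intro z hz w hw
    refine norm_sub_sub_fderiv_le_of_mapsTo_ball (hdR.mono (hsub z hz)) (fun y hy => ?_) hw
    have h1 : dist (f y) (f c) < 1 := (hball (hsub z hz hy)).2
    have h2 : dist (f z) (f c) < 1 := (hball (hsub z hz (mem_ball_self hr))).2
    rw [mem_closedBall]
    linarith [dist_triangle_right (f y) (f z) (f c)]
  have hsmall : ∀ᶠ t : ℂ in 𝓝[≠] 0, ‖t • v‖ < r := by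
    have : Tendsto (fun t : ℂ => ‖t • v‖) (𝓝 0) (𝓝 0) := by
      have : Continuous fun t : ℂ => ‖t • v‖ := by fun_prop
      simpa using this.tendsto 0
    exact (this.eventually (gt_mem_nhds hr)).filter_mono nhdsWithin_le_nhds
  have hunif : TendstoUniformlyOn (fun (t : ℂ) z => t⁻¹ • (f (z + t • v) - f z))
      (fun z => fderiv ℂ f z v) (𝓝[≠] 0) (ball c r) := by
    rw [Metric.tendstoUniformlyOn_iff]
    intro ε hε
    have hlim : ∀ᶠ t : ℂ in 𝓝[≠] 0, 2 * 2 * (‖v‖ / r) ^ 2 * ‖t‖ < ε := by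
      have : Continuous fun t : ℂ => 2 * 2 * (‖v‖ / r) ^ 2 * ‖t‖ := by fun_prop
      have := this.tendsto 0
      rw [norm_zero, mul_zero] at this
      exact (this.eventually (gt_mem_nhds hε)).filter_mono nhdsWithin_le_nhds
    filter_upwards [hsmall, hlim, self_mem_nhdsWithin] with t ht htε ht0 z hz
    have ht0' : t ≠ 0 := ht0
    refine lt_of_le_of_lt ?_ htε
    have := htay z hz (z + t • v) (by simpa [dist_eq_norm] using ht)
    rw [add_sub_cancel_left, map_smul, norm_smul] at this
    have hid : t⁻¹ • (f (z + t • v) - f z) - fderiv ℂ f z v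
        = t⁻¹ • (f (z + t • v) - f z - t • fderiv ℂ f z v) := by
      rw [smul_sub t⁻¹ _ (t • _), inv_smul_smul₀ ht0']
    rw [dist_comm, dist_eq_norm, hid, norm_smul, norm_inv]
    have htn : 0 < ‖t‖ := norm_pos_iff.2 ht0'
    calc ‖t‖⁻¹ * ‖f (z + t • v) - f z - t • fderiv ℂ f z v‖
        ≤ ‖t‖⁻¹ * (2 * 2 * (‖t‖ * ‖v‖ / r) ^ 2) := by gcongr
      _ = 2 * 2 * (‖v‖ / r) ^ 2 * ‖t‖ := by field_simp
  have hdq : ∀ᶠ t : ℂ in 𝓝[≠] 0,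
      DifferentiableOn ℂ (fun z => t⁻¹ • (f (z + t • v) - f z)) (ball c r) := by
    filter_upwards [hsmall] with t ht z hz
    have h1 : DifferentiableAt ℂ f z :=
      hdR.differentiableAt (isOpen_ball.mem_nhds (hsub z hz (mem_ball_self hr)))
    have h2 : DifferentiableAt ℂ f (z + t • v) :=
      hdR.differentiableAt (isOpen_ball.mem_nhds (hsub z hz (by simpa [dist_eq_norm] using ht)))
    exact (((h2.comp z (differentiableAt_id.add_const _)).sub h1).const_smul _).differentiableWithinAt
  exact ((TendstoUniformlyOn.differentiableOn_and_fderiv hdq hunif).1.differentiableAt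
    (ball_mem_nhds c (by positivity))).differentiableWithinAt

theorem differentiableOn_fderiv_of_isOpen [CompleteSpace F] [FiniteDimensional ℂ E] {f : E → F}
    {U : Set E} (hU : IsOpen U) (hf : DifferentiableOn ℂ f U) :
    DifferentiableOn ℂ (fderiv ℂ f) U := by
  let b := Module.finBasis ℂ E
  have hrep : fderiv ℂ f = fun z => ∑ i, (LinearMap.toContinuousLinearMap (b.coord i)).smulRight
      (fderiv ℂ f z (b i)) := by
    ext z v
    conv_lhs => rw [← b.sum_repr v, map_sum]
    simp
  rw [hrep]
  refine DifferentiableOn.fun_sum fun i _ => ?_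
  have := differentiableOn_fderiv_apply_of_isOpen hU hf (b i)
  exact (ContinuousLinearMap.smulRightL ℂ E F
    (LinearMap.toContinuousLinearMap (b.coord i))).differentiable.comp_differentiableOn this

end Weierstrass

section Osgood

theorem IsCompact.continuousOn_invFunOn_image {X Y : Type*} [TopologicalSpace X] [Nonempty X]
    [TopologicalSpace Y] [T2Space Y] {K : Set X} (hK : IsCompact K) {f : X → Y}
    (hf : ContinuousOn f K) (hinj : InjOn f K) :
    ContinuousOn (Function.invFunOn f K) (f '' K) := by
  rw [continuousOn_iff_isClosed]
  intro t ht
  refine ⟨f '' (K ∩ t), ((hK.inter_right ht).image_of_continuousOn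
    (hf.mono inter_subset_left)).isClosed, ?_⟩
  ext w
  constructor
  · rintro ⟨hw, z, hz, rfl⟩
    rw [mem_preimage, hinj.leftInvOn_invFunOn hz] at hw
    exact ⟨⟨z, ⟨hz, hw⟩, rfl⟩, ⟨z, hz, rfl⟩⟩
  · rintro ⟨⟨z, ⟨hz, hzt⟩, rfl⟩, h⟩
    refine ⟨?_, h⟩
    rwa [mem_preimage, hinj.leftInvOn_invFunOn hz]

variable {E : Type*} [NormedAddCommGroup E] [NormedSpace ℂ E]

/-- Schwarz lemma for a continuous map that is holomorphic off the zero set of a function `H`, which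
is itself continuous and holomorphic off its zero set. -/
theorem norm_sub_le_of_differentiableAt_of_ne_zero {H : E → ℂ} {g : E → E} {w₀ z₀ : E} {δ ε : ℝ}
    (hε : 0 < ε) (hH : ContinuousOn H (ball w₀ δ)) (hg : ContinuousOn g (ball w₀ δ))
    (hHd : ∀ w ∈ ball w₀ δ, H w ≠ 0 → DifferentiableAt ℂ H w)
    (hgd : ∀ w ∈ ball w₀ δ, H w ≠ 0 → DifferentiableAt ℂ g w)
    (hb : ∀ w ∈ ball w₀ δ, g w ∈ closedBall z₀ ε) {w w' : E} (hw : w ∈ ball w₀ (δ / 4))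
    (hw' : w' ∈ ball w₀ (δ / 4)) (h : H w ≠ 0) (h' : H w' ≠ 0) :
    ‖g w - g w'‖ ≤ 4 * ε / δ * ‖w - w'‖ := by
  rcases eq_or_ne w w' with rfl | hne
  · simp
  have hδ : 0 < δ := by have := pos_of_mem_ball hw; linarith
  set v := w - w'
  have hv : 0 < ‖v‖ := norm_pos_iff.2 (sub_ne_zero.2 hne)
  have hv' : ‖v‖ < δ / 2 := by
    rw [mem_ball] at hw hw'
    have := dist_triangle_right w w' w₀
    rw [dist_eq_norm] at this
    linarith
  set R : ℝ := δ / (2 * ‖v‖)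
  have hR : 0 < R := by positivity
  have hR1 : 1 < R := by rw [one_lt_div (by positivity)]; linarith
  have hRv : R * ‖v‖ = δ / 2 := by simp only [R]; field_simp
  have hmaps : MapsTo (fun t : ℂ => w' + t • v) (closedBall 0 R) (ball w₀ δ) := by
    intro t ht
    rw [mem_closedBall_zero_iff] at ht
    have h1 : dist (w' + t • v) w' ≤ R * ‖v‖ := by
      rw [dist_eq_norm, add_sub_cancel_left, norm_smul]; gcongr
    rw [mem_ball] at hw' ⊢
    linarith [dist_triangle (w' + t • v) w' w₀]
  have hline : Differentiable ℂ (fun t : ℂ => w' + t • v) := by fun_prop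
  obtain ⟨ℓ, hℓ, hℓv⟩ := exists_dual_vector'' ℂ (g w - g w')
  set p : ℂ → ℂ := fun t => ℓ (g (w' + t • v))
  set η : ℂ → ℂ := fun t => H (w' + t • v)
  have hpc : ContinuousOn p (closedBall 0 R) :=
    ℓ.continuous.comp_continuousOn (hg.comp hline.continuous.continuousOn hmaps)
  have hηc : ContinuousOn η (closedBall 0 R) := hH.comp hline.continuous.continuousOn hmaps
  have hpd : ∀ t ∈ closedBall (0 : ℂ) R, η t ≠ 0 → DifferentiableAt ℂ p t := fun t ht h =>
    ℓ.differentiableAt.comp t ((hgd _ (hmaps ht) h).comp t (hline t))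
  have hη0 : η 0 ≠ 0 := by simpa [η] using h'
  have h0 : closedBall (0 : ℂ) R ∈ 𝓝 0 := closedBall_mem_nhds 0 hR
  have hqc : ContinuousOn (dslope p 0) (closedBall 0 R) :=
    (continuousOn_dslope h0).2 ⟨hpc, hpd 0 (mem_of_mem_nhds h0) hη0⟩
  have key := norm_le_of_continuousOn_mul_pow (η := η) (q := dslope p 0) (c := 0) (R := R)
    (B := 2 * ε / R) (by positivity) hηc (fun k => hηc.mul (hqc.pow k))
    (fun t ht h => (hHd _ (hmaps (ball_subset_closedBall ht)) h).comp t (hline t))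
    (fun t ht hηt _ => ?_) (fun t ht => ?_) (t := 1) (by simpa using hR1) (by simpa [η, v] using h)
  · have h1 : dslope p 0 1 = ‖g w - g w'‖ := by
      rw [dslope_of_ne _ one_ne_zero, slope_def_field]
      simpa [p, v] using hℓv
    rw [h1, Complex.norm_real, norm_norm] at key
    refine key.trans_eq ?_
    simp only [R]
    field_simp
    norm_num
  · rcases eq_or_ne t 0 with rfl | ht0
    · have hs : {t | t ∈ closedBall (0 : ℂ) R ∧ η t ≠ 0} ∈ 𝓝 (0 : ℂ) :=
        inter_mem h0 ((hηc.continuousAt h0).eventually_ne hη0)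
      exact ((Complex.differentiableOn_dslope hs).2
        fun t ht => (hpd t ht.1 ht.2).differentiableWithinAt).differentiableAt hs
    · exact (differentiableAt_dslope_of_ne ht0).2 (hpd t (ball_subset_closedBall ht) hηt)
  · have htR : ‖t‖ = R := by simpa using ht
    have ht0 : t ≠ 0 := by rintro rfl; simp at htR; linarith
    rw [dslope_of_ne _ ht0, slope_def_field, norm_div, sub_zero, htR]
    gcongr
    have h1 := hb _ (hmaps (sphere_subset_closedBall ht))
    have h2 := hb _ (hmaps (mem_of_mem_nhds h0))
    rw [mem_closedBall] at h1 h2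
    calc ‖p t - p 0‖ = ‖ℓ (g (w' + t • v) - g (w' + (0 : ℂ) • v))‖ := by simp [p]
      _ ≤ 1 * ‖g (w' + t • v) - g (w' + (0 : ℂ) • v)‖ := ℓ.le_of_opNorm_le hℓ _
      _ ≤ 2 * ε := by
        rw [one_mul, ← dist_eq_norm]
        linarith [dist_triangle_right (g (w' + t • v)) (g (w' + (0 : ℂ) • v)) z₀]

variable [FiniteDimensional ℂ E]

theorem ContinuousLinearMap.differentiable_det :
    Differentiable ℂ (fun A : E →L[ℂ] E => A.det) := by
  let b := Module.finBasis ℂ E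
  have hrep : (fun A : E →L[ℂ] E => A.det) =
      fun A : E →L[ℂ] E => ∑ σ : Equiv.Perm (Fin (Module.finrank ℂ E)),
        (Equiv.Perm.sign σ : ℤ) • ∏ i, (LinearMap.toContinuousLinearMap (b.coord (σ i))) (A (b i)) := by
    ext A
    rw [ContinuousLinearMap.det, ← LinearMap.det_toMatrix b, Matrix.det_apply]
    simp [LinearMap.toMatrix_apply, Units.smul_def]
  rw [hrep]
  simp only [zsmul_eq_mul]
  fun_prop

theorem differentiableOn_det_fderiv {U : Set E} (hU : IsOpen U) {f : E → E}
    (hf : DifferentiableOn ℂ f U) : DifferentiableOn ℂ (fun z => (fderiv ℂ f z).det) U :=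
  Differentiable.comp_differentiableOn (g := fun A : E →L[ℂ] E => A.det)
    ContinuousLinearMap.differentiable_det (differentiableOn_fderiv_of_isOpen hU hf)

/-- Where the Jacobian does not vanish, an injective holomorphic map has a holomorphic inverse. -/
theorem image_mem_nhds_and_differentiableAt_invFunOn {U K : Set E} (hU : IsOpen U) {f : E → E}
    (hf : DifferentiableOn ℂ f U) {z : E} (hz : z ∈ U) (hdet : (fderiv ℂ f z).det ≠ 0)
    (hK : K ∈ 𝓝 z) (hinj : InjOn f K) :
    f '' K ∈ 𝓝 (f z) ∧ DifferentiableAt ℂ (Function.invFunOn f K) (f z) := by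
  have : CompleteSpace E := FiniteDimensional.complete ℂ E
  let e := (fderiv ℂ f z).toContinuousLinearEquivOfDetNeZero hdet
  have he : (e : E →L[ℂ] E) = fderiv ℂ f z := by ext; rfl
  have hstrict : HasStrictFDerivAt f (e : E →L[ℂ] E) z := by
    rw [he]
    refine hasStrictFDerivAt_of_hasFDerivAt_of_continuousAt (f' := fderiv ℂ f) ?_
      ((differentiableOn_fderiv_of_isOpen hU hf).continuousOn.continuousAt (hU.mem_nhds hz))
    filter_upwards [hU.mem_nhds hz] with y hy
    exact (hf.differentiableAt (hU.mem_nhds hy)).hasFDerivAt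
  have hφ := hstrict.to_localInverse.differentiableAt
  have hright := hstrict.eventually_right_inverse
  have hmem : ∀ᶠ w in 𝓝 (f z), hstrict.localInverse f e z w ∈ K := by
    refine hφ.continuousAt.eventually ?_
    rw [hstrict.localInverse_apply_image]
    exact hK
  refine ⟨?_, hφ.congr_of_eventuallyEq ?_⟩
  · filter_upwards [hright, hmem] with w h1 h2 using ⟨_, h2, h1⟩
  · filter_upwards [hright, hmem] with w h1 h2
    exact (congrArg _ h1).symm.trans (hinj.leftInvOn_invFunOn h2)

/-- A consequence of Sard's theorem. -/
theorem exists_det_fderiv_ne_zero {U : Set E} (hU : IsOpen U) {f : E → E}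
    (hf : DifferentiableOn ℂ f U) (hint : (interior (f '' U)).Nonempty) :
    ∃ z ∈ U, (fderiv ℂ f z).det ≠ 0 := by
  by_contra! h
  let _ : MeasurableSpace E := borel E
  have _ : BorelSpace E := ⟨rfl⟩
  have _ : FiniteDimensional ℝ E := FiniteDimensional.complexToReal E
  have hzero : (MeasureTheory.Measure.addHaar : MeasureTheory.Measure E) (f '' U) = 0 := by
    refine MeasureTheory.addHaar_image_eq_zero_of_det_fderivWithin_eq_zero _
      (f' := fun z => (fderiv ℂ f z).restrictScalars ℝ)
      (fun z hz => ((hf.differentiableAt (hU.mem_nhds hz)).hasFDerivAt.restrictScalars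
        ℝ).hasFDerivWithinAt) fun z hz => ?_
    by_contra hne
    have hinj : Function.Injective (fderiv ℂ f z) :=
      (((fderiv ℂ f z).restrictScalars ℝ).toContinuousLinearEquivOfDetNeZero hne).injective
    have hker := LinearMap.bot_lt_ker_of_det_eq_zero (f := (fderiv ℂ f z : E →ₗ[ℂ] E)) (h z hz)
    rw [LinearMap.ker_eq_bot.2 hinj] at hker
    exact lt_irrefl _ hker
  exact ((isOpen_interior.measure_pos _ hint).trans_le
    (MeasureTheory.measure_mono interior_subset)).ne' hzero

/-- A holomorphic map with a right inverse that is Lipschitz at a point has nonzero Jacobian. -/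
theorem det_fderiv_ne_zero_of_isBigO {f g : E → E} {w₀ : E}
    (hf : DifferentiableAt ℂ f (g w₀)) (hfg : ∀ᶠ w in 𝓝 w₀, f (g w) = w)
    (hg : (fun w => g w - g w₀) =O[𝓝 w₀] fun w => w - w₀) : (fderiv ℂ f (g w₀)).det ≠ 0 := by
  intro hdet
  set A := fderiv ℂ f (g w₀)
  have hrange : LinearMap.range (A : E →ₗ[ℂ] E) < ⊤ := LinearMap.range_lt_top_of_det_eq_zero hdet
  obtain ⟨ℓ, hℓ0, hℓ⟩ := Submodule.exists_le_ker_of_lt_top _ hrange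
  let ℓ' : E →L[ℂ] ℂ := LinearMap.toContinuousLinearMap ℓ
  have hgc : Tendsto g (𝓝 w₀) (𝓝 (g w₀)) := by
    rw [tendsto_iff_norm_sub_tendsto_zero, ← tendsto_zero_iff_norm_tendsto_zero]
    refine hg.trans_tendsto ?_
    simpa using (continuous_id.sub continuous_const).tendsto (f := fun w : E => w - w₀) w₀
  have h1 : (fun w => f (g w) - f (g w₀) - A (g w - g w₀)) =o[𝓝 w₀] fun w => w - w₀ :=
    (hf.hasFDerivAt.isLittleO.comp_tendsto hgc).trans_isBigO hg
  have h2 : HasFDerivAt ℓ' (0 : E →L[ℂ] ℂ) w₀ := by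
    refine HasFDerivAt.of_isLittleO ?_
    refine ((ℓ'.isBigO_comp _ _).trans_isLittleO h1).congr' ?_ EventuallyEq.rfl
    filter_upwards [hfg] with w hw
    have h3 : ℓ' (A (g w - g w₀)) = 0 := hℓ ⟨_, rfl⟩
    simp only [map_sub] at h3
    simp [hw, hfg.self_of_nhds, h3]
  refine hℓ0 ?_
  have h4 : ℓ' = 0 := ℓ'.hasFDerivAt.unique h2
  ext v
  exact congrArg (fun φ : E →L[ℂ] ℂ => φ v) h4

/-- **Osgood's theorem**: an injective holomorphic map between domains of the same dimension has
nonvanishing Jacobian. -/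
theorem det_fderiv_ne_zero_of_injOn {Ω : Set E} (hΩ : IsOpen Ω) (hΩc : IsPreconnected Ω)
    {f : E → E} (hf : DifferentiableOn ℂ f Ω) (hinj : InjOn f Ω)
    (hint : (interior (f '' Ω)).Nonempty) {z₀ : E} (hz₀ : z₀ ∈ Ω) :
    (fderiv ℂ f z₀).det ≠ 0 := by
  have : ProperSpace E := FiniteDimensional.proper ℂ E
  have hd := differentiableOn_det_fderiv hΩ hf
  set h : E → ℂ := fun z => (fderiv ℂ f z).det
  have hdense : ∃ᶠ z in 𝓝 z₀, h z ≠ 0 := by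
    intro h0
    obtain ⟨z, hz, hne⟩ := exists_det_fderiv_ne_zero hΩ hf hint
    exact hne (eqOn_zero_of_differentiableAt_of_ne_zero hΩ hΩc hd.continuousOn
      (fun w hw _ => hd.differentiableAt (hΩ.mem_nhds hw)) hz₀
      (by simpa only [not_not] using h0) z hz)
  obtain ⟨ε, hε, hεΩ⟩ := Metric.nhds_basis_closedBall.mem_iff.1 (hΩ.mem_nhds hz₀)
  set K := closedBall z₀ ε
  have hK : IsCompact K := isCompact_closedBall z₀ ε
  have hfK : ContinuousOn f K := hf.continuousOn.mono hεΩ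
  have hinjK : InjOn f K := hinj.mono hεΩ
  have hKcl : IsClosed (f '' K) := (hK.image_of_continuousOn hfK).isClosed
  obtain ⟨δ, hδ, hδS⟩ : ∃ δ > 0, ball (f z₀) δ ⊆ (f '' sphere z₀ ε)ᶜ := by
    refine Metric.isOpen_iff.1 ((isCompact_sphere z₀ ε).image_of_continuousOn
      (hfK.mono sphere_subset_closedBall)).isClosed.isOpen_compl _ ?_
    rintro ⟨z, hz, hzz⟩
    have := hinjK (sphere_subset_closedBall hz) (mem_closedBall_self hε.le) hzz
    subst this
    simp at hz
    linarith
  set U := ball (f z₀) δ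
  have hball : ∀ z ∈ K, f z ∈ U → z ∈ ball z₀ ε := by
    intro z hz hzU
    refine lt_of_le_of_ne hz fun heq => hδS hzU ⟨z, heq, rfl⟩
  set g := Function.invFunOn f K
  have hgf : ∀ z ∈ K, g (f z) = z := fun z hz => hinjK.leftInvOn_invFunOn hz
  have hgc : ContinuousOn g (f '' K) := hK.continuousOn_invFunOn_image hfK hinjK
  have hgd : ∀ z ∈ K, f z ∈ U → h z ≠ 0 → f '' K ∈ 𝓝 (f z) ∧ DifferentiableAt ℂ g (f z) := by
    intro z hz hzU hne
    exact image_mem_nhds_and_differentiableAt_invFunOn hΩ hf (hεΩ hz) hne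
      (mem_of_superset (isOpen_ball.mem_nhds (hball z hz hzU)) ball_subset_closedBall) hinjK
  set H : E → ℂ := (f '' K).indicator (fun w => h (g w))
  have hHf : ∀ z ∈ K, H (f z) = h z := fun z hz => by
    simp only [H]
    rw [indicator_of_mem (mem_image_of_mem f hz), hgf z hz]
  have hHd : ∀ w ∈ U, H w ≠ 0 → DifferentiableAt ℂ H w := by
    intro w hw hne
    obtain ⟨z, hz, rfl⟩ := mem_of_indicator_ne_zero hne
    rw [hHf z hz] at hne
    obtain ⟨h1, h2⟩ := hgd z hz hw hne
    have h3 : DifferentiableAt ℂ h (g (f z)) := by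
      rw [hgf z hz]
      exact hd.differentiableAt (hΩ.mem_nhds (hεΩ hz))
    refine (h3.comp (f z) h2).congr_of_eventuallyEq ?_
    filter_upwards [h1] with y hy using indicator_of_mem hy _
  have hHc : ContinuousOn H U := by
    intro w hw
    refine ContinuousAt.continuousWithinAt ?_
    by_cases hne : H w = 0
    · by_cases hwK : w ∈ f '' K
      · have h1 : ContinuousWithinAt (fun w => h (g w)) (f '' K) w :=
          (hd.continuousOn.comp hgc fun y hy => hεΩ (Function.invFunOn_mem hy)) w hwK
        have h2 : h (g w) = 0 := by rw [← hne]; exact (indicator_of_mem hwK (fun w => h (g w))).symm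
        rw [← continuousWithinAt_univ, ← union_compl_self (f '' K)]
        refine ContinuousWithinAt.union ?_ ?_
        · exact h1.congr (fun y hy => indicator_of_mem hy _) (indicator_of_mem hwK _)
        · exact continuousWithinAt_const.congr (fun y hy => indicator_of_notMem hy _) hne
      · refine (continuousAt_const (y := (0 : ℂ))).congr ?_
        filter_upwards [hKcl.isOpen_compl.mem_nhds hwK] with y hy
        exact (indicator_of_notMem hy _).symm
    · exact (hHd w hw hne).continuousAt
  have hHdense : ∀ w ∈ U, ∃ᶠ y in 𝓝 w, H y ≠ 0 := by
    intro w hw h0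
    have hzero := eqOn_zero_of_differentiableAt_of_ne_zero isOpen_ball
      (convex_ball (f z₀) δ).isPreconnected hHc hHd hw (by simpa only [not_not] using h0)
    refine hdense ?_
    have hfc : ContinuousAt f z₀ := hf.continuousOn.continuousAt (hΩ.mem_nhds hz₀)
    filter_upwards [closedBall_mem_nhds z₀ hε, hfc (ball_mem_nhds (f z₀) hδ)] with z hz hzU
    rw [not_not, ← hHf z hz]
    exact hzero _ hzU
  have hUK : U ⊆ f '' K := by
    intro w hw
    by_contra hwK
    refine hHdense w hw ?_
    filter_upwards [hKcl.isOpen_compl.mem_nhds hwK] with y hy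
    rw [not_not]
    exact indicator_of_notMem hy _
  have hgU : ContinuousOn g U := hgc.mono hUK
  have hlip : ∀ w ∈ ball (f z₀) (δ / 4), ∀ w' ∈ ball (f z₀) (δ / 4), H w ≠ 0 → H w' ≠ 0 →
      ‖g w - g w'‖ ≤ 4 * ε / δ * ‖w - w'‖ := by
    intro w hw w' hw' hne hne'
    refine norm_sub_le_of_differentiableAt_of_ne_zero hε hHc hgU hHd (fun y hy hy0 => ?_)
      (fun y hy => Function.invFunOn_mem (hUK hy)) hw hw' hne hne'
    obtain ⟨z, hz, rfl⟩ := hUK hy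
    rw [hHf z hz] at hy0
    exact (hgd z hz hy hy0).2
  have hquarter : ball (f z₀) (δ / 4) ⊆ U := ball_subset_ball (by linarith)
  have hcl : ∀ w ∈ ball (f z₀) (δ / 4), w ∈ closure {y | y ∈ ball (f z₀) (δ / 4) ∧ H y ≠ 0} :=
    fun w hw => mem_closure_iff_frequently.2
      (((hHdense w (hquarter hw)).and_eventually (isOpen_ball.mem_nhds hw)).mono
        fun y hy => ⟨hy.2, hy.1⟩)
  have hgat : ∀ w ∈ ball (f z₀) (δ / 4), ∀ s, ContinuousWithinAt g s w := fun w hw s =>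
    (hgU.continuousAt (isOpen_ball.mem_nhds (hquarter hw))).continuousWithinAt
  have hlip' : ∀ w ∈ ball (f z₀) (δ / 4), ∀ w' ∈ ball (f z₀) (δ / 4), H w' ≠ 0 →
      ‖g w - g w'‖ ≤ 4 * ε / δ * ‖w - w'‖ := fun w hw w' hw' hne' =>
    ContinuousWithinAt.closure_le (hcl w hw) ((hgat w hw _).sub continuousWithinAt_const).norm
      (by fun_prop) fun y hy => hlip y hy.1 w' hw' hy.2 hne'
  have hcenter : f z₀ ∈ ball (f z₀) (δ / 4) := mem_ball_self (by positivity)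
  have hlip₀ : ∀ w ∈ ball (f z₀) (δ / 4), ‖g w - g (f z₀)‖ ≤ 4 * ε / δ * ‖w - f z₀‖ :=
    fun w hw => ContinuousWithinAt.closure_le (f := fun y => ‖g w - g y‖)
      (g := fun y => 4 * ε / δ * ‖w - y‖) (hcl _ hcenter)
      (continuousWithinAt_const.sub (hgat _ hcenter _)).norm
      (by fun_prop) fun y hy => hlip' w hw y hy.1 hy.2
  have hgz : g (f z₀) = z₀ := hgf z₀ (mem_closedBall_self hε.le)
  rw [← hgz]
  refine det_fderiv_ne_zero_of_isBigO (w₀ := f z₀) ?_ ?_ ?_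
  · rw [hgz]
    exact hf.differentiableAt (hΩ.mem_nhds hz₀)
  · filter_upwards [isOpen_ball.mem_nhds hcenter] with w hw
    exact Function.invFunOn_eq (hUK (hquarter hw))
  · refine Asymptotics.IsBigO.of_bound (4 * ε / δ) ?_
    filter_upwards [isOpen_ball.mem_nhds hcenter] with w hw using hlip₀ w hw

end Osgood

section Limits

variable {ι E F : Type*} [NormedAddCommGroup E] [NormedSpace ℂ E] [NormedAddCommGroup F]
  [NormedSpace ℂ F]

/-- Locally bounded families of holomorphic maps converge continuously as soon as they converge
pointwise. -/
theorem tendsto_prod_nhds_of_bounded {l : Filter ι} {u : ι → E → F} {z : E} {a : F} {r C : ℝ}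
    (hr : 0 < r)
    (hd : ∀ᶠ j in l, DifferentiableOn ℂ (u j) (ball z r) ∧ ∀ y ∈ ball z r, ‖u j y‖ ≤ C)
    (ha : Tendsto (fun j => u j z) l (𝓝 a)) :
    Tendsto (fun q : ι × E => u q.1 q.2) (l ×ˢ 𝓝 z) (𝓝 a) := by
  rw [tendsto_iff_dist_tendsto_zero] at ha ⊢
  have hlim : Tendsto (fun q : ι × E => 2 * C / r * dist q.2 z + dist (u q.1 z) a)
      (l ×ˢ 𝓝 z) (𝓝 0) := by
    have h1 : Tendsto (fun y : E => 2 * C / r * dist y z) (𝓝 z) (𝓝 0) := by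
      have : Continuous fun y : E => 2 * C / r * dist y z := by fun_prop
      simpa using this.tendsto z
    simpa using (h1.comp tendsto_snd).add (ha.comp tendsto_fst)
  refine squeeze_zero' (Eventually.of_forall fun _ => dist_nonneg) ?_ hlim
  filter_upwards [hd.prod_mk (ball_mem_nhds z hr)] with q hq
  obtain ⟨⟨hq1, hq2⟩, hq3⟩ := hq
  refine (dist_triangle _ (u q.1 z) _).trans (add_le_add ?_ le_rfl)
  refine Complex.dist_le_div_mul_dist_of_mapsTo_ball hq1 (fun y hy => ?_) hq3
  have h1 := hq2 y hy
  have h2 := hq2 z (mem_ball_self hr)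
  rw [mem_closedBall, dist_eq_norm]
  linarith [norm_sub_le (u q.1 y) (u q.1 z)]

theorem continuousAt_of_tendsto_prod_nhds {X Y : Type*} [TopologicalSpace X] [TopologicalSpace Y]
    [RegularSpace Y] {l : Filter ι} [l.NeBot] {u : ι → X → Y} {U : X → Y} {z : X}
    (hz : Tendsto (fun q : ι × X => u q.1 q.2) (l ×ˢ 𝓝 z) (𝓝 (U z)))
    (hU : ∀ᶠ y in 𝓝 z, Tendsto (fun j => u j y) l (𝓝 (U y))) : ContinuousAt U z := by
  refine (closed_nhds_basis (U z)).tendsto_right_iff.2 fun s hs => ?_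
  have h1 : ∀ᶠ q : X × ι in 𝓝 z ×ˢ l, u q.2 q.1 ∈ s :=
    eventually_swap_iff.1 (hz.eventually hs.1)
  filter_upwards [h1.curry, hU] with y hy hyU
  exact hs.2.mem_of_tendsto hyU hy

/-- The Hurwitz theorem in several variables. -/
theorem ne_zero_of_tendsto_of_forall_ne_zero {l : Filter ι} [l.NeBot] {h : ι → E → ℂ} {H : E → ℂ}
    {z : E} {r : ℝ} (hd : ∀ᶠ j in l, DifferentiableOn ℂ (h j) (ball z r) ∧
      ∀ y ∈ ball z r, h j y ≠ 0) (hH : DifferentiableOn ℂ H (ball z r))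
    (hlim : ∀ y ∈ ball z r, Tendsto (fun q : ι × E => h q.1 q.2) (l ×ˢ 𝓝 y) (𝓝 (H y)))
    (hne : ∃ y ∈ ball z r, H y ≠ 0) : H z ≠ 0 := by
  obtain ⟨y, hy, hHy⟩ := hne
  have hr : 0 < r := pos_of_mem_ball hy
  rcases eq_or_ne y z with rfl | hyz
  · exact hHy
  set L : ℂ → E := fun t => z + t • (y - z)
  have hL : Differentiable ℂ L := by fun_prop
  have hL0 : L 0 = z := by simp [L]
  have hL1 : L 1 = y := by simp [L]
  have hyz' : 0 < ‖y - z‖ := norm_pos_iff.2 (sub_ne_zero.2 hyz)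
  set ρ : ℝ := r / ‖y - z‖
  have hρ : 0 < ρ := by positivity
  have hρ1 : 1 < ρ := by
    rw [one_lt_div hyz', ← dist_eq_norm]
    exact hy
  have hmaps : MapsTo L (ball 0 ρ) (ball z r) := by
    intro t ht
    rw [mem_ball_zero_iff, lt_div_iff₀ hyz'] at ht
    simpa [L, dist_eq_norm, norm_smul] using ht
  have hφ : AnalyticOnNhd ℂ (H ∘ L) (ball 0 ρ) :=
    (hH.comp hL.differentiableOn hmaps).analyticOnNhd isOpen_ball
  have hpunct : ∀ᶠ t in 𝓝[≠] (0 : ℂ), (H ∘ L) t ≠ 0 := by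
    refine (hφ 0 (mem_ball_self hρ)).eventually_eq_zero_or_eventually_ne_zero.resolve_left ?_
    intro h0
    refine hHy ?_
    rw [← hL1]
    exact hφ.eqOn_zero_of_preconnected_of_eventuallyEq_zero (convex_ball _ _).isPreconnected
      (mem_ball_self hρ) h0 (by simpa using hρ1)
  obtain ⟨s₀, hs₀, hs⟩ := Metric.mem_nhdsWithin_iff.1 hpunct
  obtain ⟨s, hs1, hs2⟩ := exists_between (lt_min hs₀ hρ)
  have hsρ : closedBall (0 : ℂ) s ⊆ ball 0 ρ :=
    closedBall_subset_ball (hs2.trans_le (min_le_right _ _))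
  have hsph : ∀ t ∈ sphere (0 : ℂ) s, H (L t) ≠ 0 := by
    intro t ht
    refine hs ⟨?_, ?_⟩
    · rw [mem_sphere] at ht
      rw [mem_ball, ht]
      exact hs2.trans_le (min_le_left _ _)
    · rintro rfl
      simp at ht
      linarith
  have hcomp : IsCompact (sphere (0 : ℂ) s) := isCompact_sphere 0 s
  obtain ⟨δ, hδ, hδb⟩ : ∃ δ > 0, ∀ t ∈ sphere (0 : ℂ) s, δ < ‖H (L t)‖ := by
    have hc : ContinuousOn (fun t => ‖H (L t)‖) (sphere (0 : ℂ) s) :=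
      (hφ.continuousOn.mono (sphere_subset_closedBall.trans hsρ)).norm
    obtain ⟨t₀, ht₀, hmin⟩ := hcomp.exists_isMinOn
      (NormedSpace.sphere_nonempty.2 hs1.le) hc
    have hpos := norm_pos_iff.2 (hsph t₀ ht₀)
    exact ⟨‖H (L t₀)‖ / 2, by positivity, fun t ht => (half_lt_self hpos).trans_le (hmin ht)⟩
  have hev : ∀ᶠ j in l, ∀ t ∈ sphere (0 : ℂ) s, δ < ‖h j (L t)‖ := by
    have hloc : ∀ t ∈ sphere (0 : ℂ) s, ∀ᶠ q : ι × ℂ in l ×ˢ 𝓝 t, δ < ‖h q.1 (L q.2)‖ := by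
      intro t ht
      have h1 := (hlim (L t) (hmaps (hsρ (sphere_subset_closedBall ht)))).comp
        (tendsto_id.prodMap (hL.continuous.tendsto t))
      exact h1.norm.eventually (lt_mem_nhds (hδb t ht))
    have : ∀ᶠ q : ι × ℂ in l ×ˢ 𝓝ˢ (sphere (0 : ℂ) s), δ < ‖h q.1 (L q.2)‖ := by
      rw [hcomp.prod_nhdsSet_eq_biSup]
      simpa only [eventually_iSup] using hloc
    exact this.curry.mono fun j hj => hj.self_of_nhdsSet
  have hlow : ∀ᶠ j in l, δ ≤ ‖h j z‖ := by
    filter_upwards [hev, hd] with j hj hdj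
    have hLs : ∀ t ∈ closedBall (0 : ℂ) s, L t ∈ ball z r := fun t ht => hmaps (hsρ ht)
    have hdiff : DifferentiableOn ℂ (fun t => (h j (L t))⁻¹) (closedBall (0 : ℂ) s) :=
      (hdj.1.comp hL.differentiableOn hLs).inv fun t ht => hdj.2 _ (hLs t ht)
    have := Complex.norm_le_of_forall_mem_frontier_norm_le (C := δ⁻¹) (U := ball (0 : ℂ) s)
      isBounded_ball (hdiff.diffContOnCl_ball subset_rfl) ?_ (subset_closure (mem_ball_self hs1))
    · simp only [hL0, norm_inv] at this
      rwa [inv_le_inv₀ (norm_pos_iff.2 (hdj.2 z (mem_ball_self hr))) hδ] at this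
    · intro t ht
      rw [frontier_ball _ hs1.ne'] at ht
      rw [norm_inv]
      exact inv_anti₀ hδ (hj t ht).le
  have hz : Tendsto (fun j => h j z) l (𝓝 (H z)) :=
    (hlim z (mem_ball_self hr)).comp (tendsto_id.prodMk tendsto_const_nhds)
  exact norm_pos_iff.1 (hδ.trans_le (ge_of_tendsto hz.norm hlow))

end Limits

section Ultralimits

variable {ι E : Type*} [NormedAddCommGroup E] [NormedSpace ℂ E] [FiniteDimensional ℂ E]

/-- Montel's theorem, phrased with limits along an ultrafilter. -/
theorem exists_tendsto_prod_nhds {F : Type*} [NormedAddCommGroup F] [NormedSpace ℂ F]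
    [FiniteDimensional ℂ F] (l : Ultrafilter ι) {D : Set E} (hD : IsOpen D) {u : ι → E → F} {C : ℝ}
    (hu : ∀ z ∈ D, ∃ r > 0, ∀ᶠ j in l, DifferentiableOn ℂ (u j) (ball z r) ∧
      ∀ y ∈ ball z r, ‖u j y‖ ≤ C) :
    ∃ U : E → F, DifferentiableOn ℂ U D ∧
      (∀ z ∈ D, Tendsto (fun q : ι × E => u q.1 q.2) ((l : Filter ι) ×ˢ 𝓝 z) (𝓝 (U z))) ∧
      ∀ z ∈ D, Tendsto (fun q : ι × E => fderiv ℂ (u q.1) q.2) ((l : Filter ι) ×ˢ 𝓝 z)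
        (𝓝 (fderiv ℂ U z)) := by
  have : ProperSpace E := FiniteDimensional.proper ℂ E
  have : ProperSpace F := FiniteDimensional.proper ℂ F
  have hlim : ∀ z ∈ D, ∃ a, Tendsto (fun j => u j z) l (𝓝 a) := by
    intro z hz
    obtain ⟨r, hr, hj⟩ := hu z hz
    have hmem : ∀ᶠ j in l, u j z ∈ closedBall (0 : F) C := hj.mono fun j h => by
      simpa using h.2 z (mem_ball_self hr)
    obtain ⟨a, -, ha⟩ := (isCompact_closedBall (0 : F) C).ultrafilter_le_nhds
      (l.map fun j => u j z) (le_principal_iff.2 hmem)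
    exact ⟨a, ha⟩
  choose! U hU using hlim
  have hcc : ∀ z ∈ D, Tendsto (fun q : ι × E => u q.1 q.2) ((l : Filter ι) ×ˢ 𝓝 z) (𝓝 (U z)) := by
    intro z hz
    obtain ⟨r, hr, hj⟩ := hu z hz
    exact tendsto_prod_nhds_of_bounded hr hj (hU z hz)
  have hUc : ∀ z ∈ D, ContinuousAt U z := fun z hz =>
    continuousAt_of_tendsto_prod_nhds (hcc z hz) ((hD.eventually_mem hz).mono fun y hy => hU y hy)
  have hluc : TendstoLocallyUniformlyOn u U l D := by
    rw [tendstoLocallyUniformlyOn_iff_forall_tendsto]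
    intro z hz
    rw [hD.nhdsWithin_eq hz]
    exact (((hUc z hz).tendsto.comp tendsto_snd).prodMk_nhds (hcc z hz)).mono_right
      (nhds_le_uniformity _)
  have hmain : ∀ z ∈ D, ∃ s > 0, DifferentiableOn ℂ U (ball z s) ∧
      TendstoUniformlyOn (fun j => fderiv ℂ (u j)) (fderiv ℂ U) l (ball z s) := by
    intro z hz
    obtain ⟨r, hr, hj⟩ := hu z hz
    obtain ⟨s, hs, hsD⟩ := Metric.nhds_basis_closedBall.mem_iff.1
      (inter_mem (hD.mem_nhds hz) (ball_mem_nhds z hr))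
    have hunif : TendstoUniformlyOn u U l (ball z s) :=
      ((tendstoLocallyUniformlyOn_iff_forall_isCompact hD).1 hluc _
        (fun y hy => (hsD hy).1) (isCompact_closedBall z s)).mono ball_subset_closedBall
    exact ⟨s / 2, by positivity, hunif.differentiableOn_and_fderiv (hj.mono fun j h =>
      h.1.mono fun y hy => (hsD (ball_subset_closedBall hy)).2)⟩
  have hUd : DifferentiableOn ℂ U D := fun z hz => by
    obtain ⟨s, hs, h, -⟩ := hmain z hz
    exact (h.differentiableAt (ball_mem_nhds z hs)).differentiableWithinAt
  refine ⟨U, hUd, hcc, fun z hz => ?_⟩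
  obtain ⟨s, hs, -, h⟩ := hmain z hz
  have hc : ContinuousAt (fderiv ℂ U) z :=
    (differentiableOn_fderiv_of_isOpen hD hUd).continuousOn.continuousAt (hD.mem_nhds hz)
  rw [Metric.tendsto_nhds]
  intro ε hε
  filter_upwards [(Metric.tendstoUniformlyOn_iff.1 h (ε / 2) (half_pos hε)).prod_mk
    ((eventually_mem_set.2 (ball_mem_nhds z hs)).and
      (Metric.tendsto_nhds.1 hc (ε / 2) (half_pos hε)))] with q hq
  have h1 := hq.1 q.2 hq.2.1
  have h2 := hq.2.2
  rw [dist_comm] at h1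
  linarith [dist_triangle (fderiv ℂ (u q.1) q.2) (fderiv ℂ U q.2) (fderiv ℂ U z)]

theorem eventually_mem_image_ball_of_det_ne_zero {l : Filter ι} {u : ι → E → E} {U : E → E} {z : E}
    {r : ℝ} (hr : 0 < r) (hd : ∀ᶠ j in l, DifferentiableOn ℂ (u j) (ball z r))
    (hz : Tendsto (fun j => u j z) l (𝓝 (U z)))
    (hz' : Tendsto (fun q : ι × E => fderiv ℂ (u q.1) q.2) (l ×ˢ 𝓝 z) (𝓝 (fderiv ℂ U z)))
    (hdet : (fderiv ℂ U z).det ≠ 0) : ∀ᶠ j in l, U z ∈ u j '' ball z r := by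
  have : CompleteSpace E := FiniteDimensional.complete ℂ E
  rcases subsingleton_or_nontrivial E with hE | hE
  · exact Eventually.of_forall fun j => ⟨z, mem_ball_self hr, Subsingleton.elim _ _⟩
  let e := (fderiv ℂ U z).toContinuousLinearEquivOfDetNeZero hdet
  have he : (e : E →L[ℂ] E) = fderiv ℂ U z := by ext; rfl
  let R := e.toNonlinearRightInverse
  have hR : 0 < R.nnnorm := e.nnnorm_symm_pos
  set c : NNReal := R.nnnorm⁻¹ / 2
  have hc : 0 < c := by positivity
  have hcR : (R.nnnorm : ℝ)⁻¹ - c = c := by simp only [c]; push_cast; ring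
  obtain ⟨P, hP, Q, hQ, hPQ⟩ := eventually_prod_iff.1 (Metric.tendsto_nhds.1 hz' c hc)
  obtain ⟨s, hs, hsQ⟩ := Metric.nhds_basis_closedBall.mem_iff.1
    (inter_mem hQ (ball_mem_nhds z hr))
  filter_upwards [hP, hd, Metric.tendsto_nhds.1 hz (c * s) (by positivity)] with j hj hdj hzj
  have happ : ApproximatesLinearOn (u j) (e : E →L[ℂ] E) (closedBall z s) c := by
    rw [ApproximatesLinearOn.approximatesLinearOn_iff_lipschitzOnWith, he]
    refine (convex_closedBall z s).lipschitzOnWith_of_nnnorm_hasFDerivWithin_le (𝕜 := ℂ)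
      (f' := fun y => fderiv ℂ (u j) y - fderiv ℂ U z) (fun y hy => ?_) fun y hy => ?_
    · exact ((hdj.differentiableAt (isOpen_ball.mem_nhds (hsQ hy).2)).hasFDerivAt.sub
        (fderiv ℂ U z).hasFDerivAt).hasFDerivWithinAt
    · have := (hPQ hj (hsQ hy).1).le
      rwa [dist_eq_norm] at this
  have hsurj := happ.surjOn_closedBall_of_nonlinearRightInverse R hs.le subset_rfl
  rw [hcR] at hsurj
  obtain ⟨y, hy, hyz⟩ := hsurj (a := U z) (by rw [mem_closedBall, dist_comm]; exact hzj.le)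
  exact ⟨y, (hsQ hy).2, hyz⟩

/-- A limit of holomorphic maps with nonvanishing Jacobians which is nondegenerate at one point is
nondegenerate everywhere. -/
theorem det_fderiv_ne_zero_of_tendsto {l : Filter ι} [l.NeBot] {D : Set E} (hD : IsOpen D)
    (hDc : IsPreconnected D) {u : ι → E → E} {U : E → E}
    (hu : ∀ z ∈ D, ∃ r > 0, ∀ᶠ j in l, DifferentiableOn ℂ (u j) (ball z r) ∧
      ∀ y ∈ ball z r, (fderiv ℂ (u j) y).det ≠ 0)
    (hU : DifferentiableOn ℂ U D)
    (hU' : ∀ z ∈ D, Tendsto (fun q : ι × E => fderiv ℂ (u q.1) q.2) (l ×ˢ 𝓝 z)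
      (𝓝 (fderiv ℂ U z)))
    {p : E} (hp : p ∈ D) (hpdet : (fderiv ℂ U p).det ≠ 0) :
    ∀ z ∈ D, (fderiv ℂ U z).det ≠ 0 := by
  intro z hz
  obtain ⟨r₁, hr₁, hj⟩ := hu z hz
  obtain ⟨r, hr, hrD⟩ := Metric.mem_nhds_iff.1 (inter_mem (hD.mem_nhds hz) (ball_mem_nhds z hr₁))
  have hH := differentiableOn_det_fderiv hD hU
  refine ne_zero_of_tendsto_of_forall_ne_zero (h := fun j y => (fderiv ℂ (u j) y).det)
    (H := fun y => (fderiv ℂ U y).det) (l := l) (r := r) ?_ (hH.mono fun y hy => (hrD hy).1) ?_ ?_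
  · filter_upwards [hj] with j hj
    exact ⟨differentiableOn_det_fderiv isOpen_ball (hj.1.mono fun y hy => (hrD hy).2),
      fun y hy => hj.2 y (hrD hy).2⟩
  · intro y hy
    have hdetc : Continuous fun A : E →L[ℂ] E => A.det :=
      ContinuousLinearMap.differentiable_det.continuous
    exact (hdetc.tendsto _).comp (hU' y (hrD hy).1)
  · by_contra! h0
    refine hpdet (eqOn_zero_of_differentiableAt_of_ne_zero hD hDc hH.continuousOn
      (fun w hw _ => hH.differentiableAt (hD.mem_nhds hw)) hz ?_ p hp)
    filter_upwards [ball_mem_nhds z hr] with y hy using h0 y hy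

end Ultralimits

theorem det_fderiv_ne_zero_of_eventually_comp_eq {E : Type*} [NormedAddCommGroup E]
    [NormedSpace ℂ E] {f g : E → E} {w : E} (hf : DifferentiableAt ℂ f (g w))
    (hg : DifferentiableAt ℂ g w) (hfg : ∀ᶠ y in 𝓝 w, f (g y) = y) :
    (fderiv ℂ f (g w)).det ≠ 0 ∧ (fderiv ℂ g w).det ≠ 0 := by
  have h1 : (fderiv ℂ f (g w)).comp (fderiv ℂ g w) = ContinuousLinearMap.id ℂ E :=
    ((hf.hasFDerivAt.comp w hg.hasFDerivAt).congr_of_eventuallyEq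
      (hfg.mono fun y hy => hy.symm)).unique (hasFDerivAt_id w)
  have h2 : (fderiv ℂ f (g w)).det * (fderiv ℂ g w).det = 1 := by
    have := congrArg ContinuousLinearMap.det h1
    rw [ContinuousLinearMap.det, ContinuousLinearMap.toLinearMap_comp, LinearMap.det_comp] at this
    simpa [ContinuousLinearMap.det] using this
  exact ⟨left_ne_zero_of_mul_eq_one h2, right_ne_zero_of_mul_eq_one h2⟩

theorem stmt10 (N : ℕ) (hN : 1 ≤ N)
    (Ω M : Set (Fin N → ℂ))
    (hΩopen : IsOpen Ω) (hΩconn : IsConnected Ω) (hΩbdd : Bornology.IsBounded Ω)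
    (hMopen : IsOpen M) (hMconn : IsConnected M) (hMbdd : Bornology.IsBounded M)
    (f : ℕ → (Fin N → ℂ) → (Fin N → ℂ))
    (hfhol : ∀ j, DifferentiableOn ℂ (f j) Ω)
    (hfinj : ∀ j, Set.InjOn (f j) Ω)
    (hfmaps : ∀ j, Set.MapsTo (f j) Ω M)
    (hexh : ∀ K : Set (Fin N → ℂ), K ⊆ M → IsCompact K →
      ∃ j0 : ℕ, ∀ j ≥ j0, K ⊆ f j '' Ω)
    (a : Fin N → ℂ) (ha : a ∈ M)
    (x : ℕ → Fin N → ℂ) (hx : ∀ j, x j ∈ Ω) (hfx : ∀ j, f j (x j) = a)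
    (p : Fin N → ℂ) (hp : p ∈ Ω) (hxp : Tendsto x atTop (nhds p)) :
    ∃ F G : (Fin N → ℂ) → (Fin N → ℂ),
      DifferentiableOn ℂ F Ω ∧ Set.BijOn F Ω M ∧
      DifferentiableOn ℂ G M ∧
      (∀ z ∈ Ω, G (F z) = z) ∧ (∀ w ∈ M, F (G w) = w) := by
  let l : Ultrafilter ℕ := hyperfilter ℕ
  have hl : (l : Filter ℕ) ≤ atTop := Nat.hyperfilter_le_atTop
  obtain ⟨CΩ, hCΩ⟩ := hΩbdd.exists_norm_le
  obtain ⟨CM, hCM⟩ := hMbdd.exists_norm_le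
  have hexh' : ∀ w ∈ M, ∃ r > 0, ∀ᶠ j in (l : Filter ℕ), ball w r ⊆ f j '' Ω := by
    intro w hw
    obtain ⟨r, hr, hrM⟩ := Metric.nhds_basis_closedBall.mem_iff.1 (hMopen.mem_nhds hw)
    obtain ⟨j0, hj0⟩ := hexh _ hrM (isCompact_closedBall w r)
    exact ⟨r, hr, ((eventually_ge_atTop j0).mono fun j hj =>
      ball_subset_closedBall.trans (hj0 j hj)).filter_mono hl⟩
  have hjac : ∀ᶠ j in (l : Filter ℕ), ∀ z ∈ Ω, (fderiv ℂ (f j) z).det ≠ 0 := by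
    obtain ⟨r, hr, hj⟩ := hexh' a ha
    filter_upwards [hj] with j hj z hz
    exact det_fderiv_ne_zero_of_injOn hΩopen hΩconn.isPreconnected (hfhol j) (hfinj j)
      ⟨a, mem_interior.2 ⟨_, hj, isOpen_ball, mem_ball_self hr⟩⟩ hz
  set g : ℕ → (Fin N → ℂ) → (Fin N → ℂ) := fun j => Function.invFunOn (f j) Ω
  have hgf : ∀ j, ∀ z ∈ Ω, g j (f j z) = z := fun j z hz => (hfinj j).leftInvOn_invFunOn hz
  have hfg : ∀ j, ∀ w ∈ f j '' Ω, f j (g j w) = w := fun j w hw => Function.invFunOn_eq hw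
  have hgΩ : ∀ j, ∀ w ∈ f j '' Ω, g j w ∈ Ω := fun j w hw => Function.invFunOn_mem hw
  have hfloc : ∀ z ∈ Ω, ∃ r > 0, ball z r ⊆ Ω ∧ ∀ᶠ j in (l : Filter ℕ),
      DifferentiableOn ℂ (f j) (ball z r) ∧
        ∀ y ∈ ball z r, ‖f j y‖ ≤ CM ∧ (fderiv ℂ (f j) y).det ≠ 0 := by
    intro z hz
    obtain ⟨r, hr, hrΩ⟩ := Metric.isOpen_iff.1 hΩopen z hz
    refine ⟨r, hr, hrΩ, hjac.mono fun j hj => ⟨(hfhol j).mono hrΩ, fun y hy => ?_⟩⟩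
    exact ⟨hCM _ (hfmaps j (hrΩ hy)), hj y (hrΩ hy)⟩
  have hgloc : ∀ w ∈ M, ∃ r > 0, ∀ᶠ j in (l : Filter ℕ), DifferentiableOn ℂ (g j) (ball w r) ∧
      ∀ y ∈ ball w r, ‖g j y‖ ≤ CΩ ∧ (fderiv ℂ (g j) y).det ≠ 0 := by
    intro w hw
    obtain ⟨r, hr, hr'⟩ := hexh' w hw
    refine ⟨r, hr, ?_⟩
    filter_upwards [hr', hjac] with j hj hjacj
    have hdiff : ∀ y ∈ ball w r, DifferentiableAt ℂ (g j) y := by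
      intro y hy
      obtain ⟨z, hz, rfl⟩ := hj hy
      exact (image_mem_nhds_and_differentiableAt_invFunOn hΩopen (hfhol j) hz (hjacj z hz)
        (hΩopen.mem_nhds hz) (hfinj j)).2
    refine ⟨fun y hy => (hdiff y hy).differentiableWithinAt, fun y hy =>
      ⟨hCΩ _ (hgΩ j y (hj hy)), ?_⟩⟩
    refine (det_fderiv_ne_zero_of_eventually_comp_eq (f := f j)
      ((hfhol j).differentiableAt (hΩopen.mem_nhds (hgΩ j y (hj hy)))) (hdiff y hy) ?_).2
    filter_upwards [isOpen_ball.mem_nhds hy] with v hv using hfg j v (hj hv)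
  obtain ⟨F, hFd, hFcc, hFcc'⟩ := exists_tendsto_prod_nhds l hΩopen (u := f) (C := CM)
    fun z hz => by
      obtain ⟨r, hr, -, h⟩ := hfloc z hz
      exact ⟨r, hr, h.mono fun j hj => ⟨hj.1, fun y hy => (hj.2 y hy).1⟩⟩
  obtain ⟨G, hGd, hGcc, hGcc'⟩ := exists_tendsto_prod_nhds l hMopen (u := g) (C := CΩ)
    fun w hw => by
      obtain ⟨r, hr, h⟩ := hgloc w hw
      exact ⟨r, hr, h.mono fun j hj => ⟨hj.1, fun y hy => (hj.2 y hy).1⟩⟩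
  have hFlim : ∀ z ∈ Ω, Tendsto (fun j => f j z) l (𝓝 (F z)) := fun z hz =>
    (hFcc z hz).comp (tendsto_id.prodMk tendsto_const_nhds)
  have hGlim : ∀ w ∈ M, Tendsto (fun j => g j w) l (𝓝 (G w)) := fun w hw =>
    (hGcc w hw).comp (tendsto_id.prodMk tendsto_const_nhds)
  have hGF : ∀ z ∈ Ω, F z ∈ M → G (F z) = z := by
    intro z hz hFz
    have h1 : Tendsto (fun j => g j (f j z)) l (𝓝 (G (F z))) :=
      (hGcc _ hFz).comp (tendsto_id.prodMk (hFlim z hz))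
    refine tendsto_nhds_unique h1 (tendsto_const_nhds.congr fun j => (hgf j z hz).symm)
  have hFG : ∀ w ∈ M, G w ∈ Ω → F (G w) = w := by
    intro w hw hGw
    have h1 : Tendsto (fun j => f j (g j w)) l (𝓝 (F (G w))) :=
      (hFcc _ hGw).comp (tendsto_id.prodMk (hGlim w hw))
    obtain ⟨r, hr, hr'⟩ := hexh' w hw
    refine tendsto_nhds_unique h1 (tendsto_const_nhds.congr' ?_)
    filter_upwards [hr'] with j hj using (hfg j w (hj (mem_ball_self hr))).symm
  have hFp : F p = a := by
    have h1 : Tendsto (fun j => f j (x j)) l (𝓝 (F p)) :=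
      (hFcc p hp).comp (tendsto_id.prodMk (hxp.mono_left hl))
    exact tendsto_nhds_unique h1 (tendsto_const_nhds.congr fun j => (hfx j).symm)
  have hFpd : DifferentiableAt ℂ F p := hFd.differentiableAt (hΩopen.mem_nhds hp)
  have hdet : (fderiv ℂ G (F p)).det ≠ 0 ∧ (fderiv ℂ F p).det ≠ 0 := by
    refine det_fderiv_ne_zero_of_eventually_comp_eq ?_ hFpd ?_
    · rw [hFp]
      exact hGd.differentiableAt (hMopen.mem_nhds ha)
    · have h1 : ∀ᶠ z in 𝓝 p, F z ∈ M :=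
        hFpd.continuousAt.eventually (hMopen.mem_nhds (hFp ▸ ha))
      filter_upwards [h1, hΩopen.mem_nhds hp] with z hz1 hz2 using hGF z hz2 hz1
  rw [hFp] at hdet
  have hFM : ∀ z ∈ Ω, F z ∈ M := by
    intro z hz
    have hdetz := det_fderiv_ne_zero_of_tendsto hΩopen hΩconn.isPreconnected
      (fun z hz => by
        obtain ⟨r, hr, -, h⟩ := hfloc z hz
        exact ⟨r, hr, h.mono fun j hj => ⟨hj.1, fun y hy => (hj.2 y hy).2⟩⟩)
      hFd hFcc' hp hdet.2 z hz
    obtain ⟨r, hr, hrΩ, h⟩ := hfloc z hz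
    obtain ⟨j, y, hy, hyz⟩ := (eventually_mem_image_ball_of_det_ne_zero hr
      (h.mono fun j hj => hj.1) (hFlim z hz) (hFcc' z hz) hdetz).exists
    exact hyz ▸ hfmaps j (hrΩ hy)
  have hGM : ∀ w ∈ M, G w ∈ Ω := by
    intro w hw
    have hdetw := det_fderiv_ne_zero_of_tendsto hMopen hMconn.isPreconnected
      (fun w hw => by
        obtain ⟨r, hr, h⟩ := hgloc w hw
        exact ⟨r, hr, h.mono fun j hj => ⟨hj.1, fun y hy => (hj.2 y hy).2⟩⟩)
      hGd hGcc' ha hdet.1 w hw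
    obtain ⟨r₁, hr₁, h⟩ := hgloc w hw
    obtain ⟨r₂, hr₂, h'⟩ := hexh' w hw
    obtain ⟨j, ⟨y, hy, hyw⟩, hj⟩ := ((eventually_mem_image_ball_of_det_ne_zero (lt_min hr₁ hr₂)
      (h.mono fun j hj => hj.1.mono (ball_subset_ball (min_le_left _ _)))
      (hGlim w hw) (hGcc' w hw) hdetw).and h').exists
    exact hyw ▸ hgΩ j y (hj (ball_subset_ball (min_le_right _ _) hy))
  have hleft : ∀ z ∈ Ω, G (F z) = z := fun z hz => hGF z hz (hFM z hz)
  have hright : ∀ w ∈ M, F (G w) = w := fun w hw => hFG w hw (hGM w hw)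
  exact ⟨F, G, hFd, BijOn.mk hFM (LeftInvOn.injOn hleft)
    (fun w hw => ⟨G w, hGM w hw, hright w hw⟩), hGd, hleft, hright⟩
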